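/- Let (a_j)_{j≥1} and (b_j)_{j≥1} be sequences of vectors in ℤ³, a_j = (a_{j,0}, a_{j,1}, a_{j,2}) and b_j = (b_{j,0}, b_{j,1}, b_{j,2}), all but finitely many equal to zero (or with absolutely summable products), such that a_{j,0}+a_{j,1}+a_{j,2} = 0 and b_{j,0}+b_{j,1}+b_{j,2} = 0 for all j, and such that Σ_j a_{j,0} b_{j,0} = Σ_j a_{j,1} b_{j,1} = Σ_j a_{j,2} b_{j,2} = 1 and Σ_j a_{j,0} b_{j,1} = Σ_j a_{j,1} b_{j,2} = Σ_j a_{j,2} b_{j,0} = −1. Then Σ_j ‖a_j‖₁ ‖b_j‖₁ ≥ 8. -/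

import Mathlib

/-- If `(a_j)`, `(b_j)` are sequences in `ℤ³` with coordinates summing to zero,
with absolutely summable products of ℓ¹-norms, satisfying the six product identities
`Σ a_{j,i} b_{j,i} = 1` (i = 0,1,2) and `Σ a_{j,0}b_{j,1} = Σ a_{j,1}b_{j,2} = Σ a_{j,2}b_{j,0} = -1`,
then `Σ_j ‖a_j‖₁ ‖b_j‖₁ ≥ 8`. -/
theorem statement6 (a b : ℕ → Fin 3 → ℤ)
    (ha : ∀ j, a j 0 + a j 1 + a j 2 = 0)
    (hb : ∀ j, b j 0 + b j 1 + b j 2 = 0)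
    (hsum : Summable (fun j => ((∑ i : Fin 3, |a j i| : ℤ) : ℝ) * ((∑ i : Fin 3, |b j i| : ℤ) : ℝ)))
    (h00 : ∑' j : ℕ, ((a j 0 * b j 0 : ℤ) : ℝ) = 1)
    (h11 : ∑' j : ℕ, ((a j 1 * b j 1 : ℤ) : ℝ) = 1)
    (h22 : ∑' j : ℕ, ((a j 2 * b j 2 : ℤ) : ℝ) = 1)
    (h01 : ∑' j : ℕ, ((a j 0 * b j 1 : ℤ) : ℝ) = -1)
    (h12 : ∑' j : ℕ, ((a j 1 * b j 2 : ℤ) : ℝ) = -1)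
    (h20 : ∑' j : ℕ, ((a j 2 * b j 0 : ℤ) : ℝ) = -1) :
    8 ≤ ∑' j : ℕ, ((∑ i : Fin 3, |a j i| : ℤ) : ℝ) * ((∑ i : Fin 3, |b j i| : ℤ) : ℝ) := by
  have habs : ∀ j i k, |a j i * b j k| ≤ (∑ i : Fin 3, |a j i|) * (∑ i : Fin 3, |b j i|) := by
    intro j i k
    rw [abs_mul]
    exact mul_le_mul
      (Finset.single_le_sum (f := fun i => |a j i|) (fun _ _ => abs_nonneg _) (Finset.mem_univ i))
      (Finset.single_le_sum (f := fun i => |b j i|) (fun _ _ => abs_nonneg _) (Finset.mem_univ k))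
      (abs_nonneg _) (Finset.sum_nonneg fun _ _ => abs_nonneg _)
  have hev := hsum.tendsto_cofinite_zero.eventually (gt_mem_nhds (zero_lt_one' ℝ))
  rw [Filter.eventually_cofinite] at hev
  set s : Finset ℕ := hev.toFinset with hs
  have hN : ∀ j, j ∉ s → (∑ i : Fin 3, |a j i|) * (∑ i : Fin 3, |b j i|) = 0 := by
    intro j hj
    have h1 : ((∑ i : Fin 3, |a j i| : ℤ) : ℝ) * ((∑ i : Fin 3, |b j i| : ℤ) : ℝ) < 1 := by
      by_contra h
      exact hj (by rw [hs, Set.Finite.mem_toFinset]; exact h)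
    have h2 : (∑ i : Fin 3, |a j i|) * (∑ i : Fin 3, |b j i|) < 1 := by exact_mod_cast h1
    have h3 := (abs_nonneg _).trans (habs j 0 0)
    omega
  have key : ∀ i k, ∑' j : ℕ, ((a j i * b j k : ℤ) : ℝ) = ((∑ j ∈ s, a j i * b j k : ℤ) : ℝ) := by
    intro i k
    rw [tsum_eq_sum (s := s), Int.cast_sum]
    intro j hj
    have h := habs j i k
    rw [hN j hj] at h
    rw [abs_nonpos_iff.mp h, Int.cast_zero]
  have keyN : ∑' j : ℕ, ((∑ i : Fin 3, |a j i| : ℤ) : ℝ) * ((∑ i : Fin 3, |b j i| : ℤ) : ℝ)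
      = ((∑ j ∈ s, (∑ i : Fin 3, |a j i|) * (∑ i : Fin 3, |b j i|) : ℤ) : ℝ) := by
    rw [tsum_eq_sum (s := s), Int.cast_sum]
    · exact Finset.sum_congr rfl fun j _ => (Int.cast_mul _ _).symm
    · intro j hj
      rw [← Int.cast_mul, hN j hj, Int.cast_zero]
  rw [key] at h00 h11 h22 h01 h12 h20
  rw [keyN]
  have g00 : ∑ j ∈ s, a j 0 * b j 0 = 1 := by exact_mod_cast h00
  have g11 : ∑ j ∈ s, a j 1 * b j 1 = 1 := by exact_mod_cast h11
  have g22 : ∑ j ∈ s, a j 2 * b j 2 = 1 := by exact_mod_cast h22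
  have g01 : ∑ j ∈ s, a j 0 * b j 1 = -1 := by exact_mod_cast h01
  have g12 : ∑ j ∈ s, a j 1 * b j 2 = -1 := by exact_mod_cast h12
  have g20 : ∑ j ∈ s, a j 2 * b j 0 = -1 := by exact_mod_cast h20
  have heven : ∀ x y z : ℤ, x + y + z = 0 → (2 : ℤ) ∣ |x| + |y| + |z| := by
    intro x y z h
    rcases abs_cases x with hx | hx <;> rcases abs_cases y with hy | hy <;>
      rcases abs_cases z with hz | hz <;> omega
  have hdvd : (4 : ℤ) ∣ ∑ j ∈ s, (∑ i : Fin 3, |a j i|) * (∑ i : Fin 3, |b j i|) := by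
    apply Finset.dvd_sum
    intro j _
    rw [Fin.sum_univ_three, Fin.sum_univ_three]
    exact mul_dvd_mul (heven _ _ _ (ha j)) (heven _ _ _ (hb j))
  have hle : ∑ j ∈ s, (a j 0 * b j 0 + a j 1 * b j 1 + a j 2 * b j 2
      - a j 0 * b j 1 - a j 1 * b j 2 - a j 2 * b j 0)
      ≤ ∑ j ∈ s, (∑ i : Fin 3, |a j i|) * (∑ i : Fin 3, |b j i|) := by
    apply Finset.sum_le_sum
    intro j _
    rw [Fin.sum_univ_three, Fin.sum_univ_three]
    have p : ∀ x y : ℤ, x * y ≤ |x| * |y| := fun x y => by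
      rw [← abs_mul]; exact le_abs_self _
    have m : ∀ x y : ℤ, -(x * y) ≤ |x| * |y| := fun x y => by
      rw [← abs_mul]; exact neg_le_abs _
    have q : ∀ x y : ℤ, 0 ≤ |x| * |y| := fun x y => by positivity
    linarith [p (a j 0) (b j 0), p (a j 1) (b j 1), p (a j 2) (b j 2), m (a j 0) (b j 1),
      m (a j 1) (b j 2), m (a j 2) (b j 0), q (a j 0) (b j 2), q (a j 1) (b j 0),
      q (a j 2) (b j 1)]
  simp only [Finset.sum_sub_distrib, Finset.sum_add_distrib] at hle
  rw [g00, g11, g22, g01, g12, g20] at hle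
  have : (8 : ℤ) ≤ ∑ j ∈ s, (∑ i : Fin 3, |a j i|) * (∑ i : Fin 3, |b j i|) := by omega
  exact_mod_cast this
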